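/- For every κ > 0 and every real-valued Schwartz function q on ℝ, both sides of the following identity are finite and equal: ∬_{ℝ×ℝ} ((2κ)^{-1} e^{-κ|x-y|})² q(x) q(y) dx dy = κ^{-1} ∫_ℝ |q̂(ξ)|² / (ξ² + 4κ²) dξ. (The left-hand side is the squared Hilbert–Schmidt norm of the operator √R₀(κ) q √R₀(κ), where R₀(κ) = (−∂² + κ²)^{-1} has integral kernel (2κ)^{-1} e^{-κ|x-y|}; the right-hand side is κ^{-1}‖q‖²_{H^{-1}_κ}.) -/

import Mathlib

open MeasureTheory

/-- The Fourier transform with the paper's normalization: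
`f̂(ξ) = (2π)^{-1/2} ∫ e^{-iξx} f(x) dx`. -/
noncomputable def ft (f : ℝ → ℂ) (ξ : ℝ) : ℂ :=
  (Real.sqrt (2 * Real.pi) : ℂ)⁻¹ * ∫ x : ℝ, Complex.exp (-(Complex.I * (ξ : ℂ) * (x : ℂ))) * f x

/-! The squared resolvent kernel is `(2κ)⁻² e^{-2κ|x-y|}`, and `e^{-a|·|}` is the Fourier transform
of the positive density `2a / ((2πw)² + a²)`. Writing the kernel as a superposition of the
characters `e^{-2πiw(x-y)} = e^{-2πiwx} conj(e^{-2πiwy})` and exchanging integrals therefore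
replaces the double integral of the kernel against `q(x) conj(q(y))` by the integral of the density
against `|𝓕 q|²`. -/

open Real
open scoped FourierTransform ComplexConjugate RealInnerProductSpace

section InnerProductSpace

variable {V : Type*} [NormedAddCommGroup V] [InnerProductSpace ℝ V] [FiniteDimensional ℝ V]
  [MeasurableSpace V] [BorelSpace V]

lemma conj_fourier (g : V → ℂ) (ξ : V) :
    conj (𝓕 g ξ) = ∫ y, 𝐞 ⟪y, ξ⟫ • conj (g y) := by
  rw [Real.fourier_eq, ← integral_conj]
  simp only [Circle.smul_def, smul_eq_mul, map_mul, ← Circle.coe_inv_eq_conj,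
    AddChar.map_neg_eq_inv, inv_inv]

lemma integral_prod_fourierChar_sub_smul_mul_conj (f g : V → ℂ) (ξ : V) :
    ∫ p : V × V, 𝐞 (-⟪p.1 - p.2, ξ⟫) • (f p.1 * conj (g p.2)) = 𝓕 f ξ * conj (𝓕 g ξ) := by
  rw [conj_fourier, Real.fourier_eq, ← integral_prod_mul, Measure.volume_eq_prod]
  congr with p
  rw [inner_sub_left, neg_sub', sub_neg_eq_add, AddChar.map_add_eq_mul, smul_mul_smul_comm]

theorem integral_fourier_sub_mul_conj {f g h : V → ℂ} (hf : Integrable f) (hg : Integrable g)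
    (hh : Integrable h) :
    ∫ p : V × V, 𝓕 h (p.1 - p.2) * (f p.1 * conj (g p.2)) =
      ∫ ξ, h ξ * (𝓕 f ξ * conj (𝓕 g ξ)) := by
  -- Self-adjointness of the Fourier integral, for the pairing of `V × V` with `V` by `⟪x - y, ξ⟫`.
  let L : V × V →ₗ[ℝ] V →ₗ[ℝ] ℝ :=
    innerₗ V ∘ₗ (LinearMap.fst ℝ V V - LinearMap.snd ℝ V V)
  have hL (p : V × V) (ξ : V) : L p ξ = ⟪p.1 - p.2, ξ⟫ := rfl
  have hfg : Integrable (fun p : V × V ↦ f p.1 * conj (g p.2)) :=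
    hf.mul_prod (Complex.conjCLE.toContinuousLinearMap.integrable_comp hg)
  have key := VectorFourier.integral_fourierIntegral_smul_eq_flip (L := L)
    Real.continuous_fourierChar (by simp only [hL]; fun_prop) hfg hh
  simp only [VectorFourier.fourierIntegral, LinearMap.flip_apply, hL,
    integral_prod_fourierChar_sub_smul_mul_conj, smul_eq_mul] at key
  simp only [Real.fourier_eq, real_inner_comm, mul_comm] at key ⊢
  exact key.symm

end InnerProductSpace

section ExpNegMulAbs

lemma eqOn_Iic_cexp_neg_mul_abs_add (a b : ℂ) :
    Set.EqOn (fun x : ℝ ↦ Complex.exp (-a * |x| + b * x)) (fun x ↦ Complex.exp ((a + b) * x))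
      (Set.Iic 0) := by
  intro x hx
  simp only [abs_of_nonpos (Set.mem_Iic.mp hx), Complex.ofReal_neg, neg_mul_neg, add_mul]

lemma eqOn_Ioi_cexp_neg_mul_abs_add (a b : ℂ) :
    Set.EqOn (fun x : ℝ ↦ Complex.exp (-a * |x| + b * x)) (fun x ↦ Complex.exp ((-a + b) * x))
      (Set.Ioi 0) := by
  intro x hx
  simp only [abs_of_pos (Set.mem_Ioi.mp hx), add_mul]

variable {a b : ℂ}

lemma integrableOn_Iic_cexp_neg_mul_abs_add (h : |b.re| < a.re) :
    IntegrableOn (fun x : ℝ ↦ Complex.exp (-a * |x| + b * x)) (Set.Iic 0) :=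
  (integrableOn_exp_mul_complex_Iic (by
    rw [Complex.add_re]; linarith [neg_abs_le b.re]) 0).congr_fun
    (eqOn_Iic_cexp_neg_mul_abs_add a b).symm measurableSet_Iic

lemma integrableOn_Ioi_cexp_neg_mul_abs_add (h : |b.re| < a.re) :
    IntegrableOn (fun x : ℝ ↦ Complex.exp (-a * |x| + b * x)) (Set.Ioi 0) :=
  (integrableOn_exp_mul_complex_Ioi (by
    rw [Complex.add_re, Complex.neg_re]; linarith [le_abs_self b.re]) 0).congr_fun
    (eqOn_Ioi_cexp_neg_mul_abs_add a b).symm measurableSet_Ioi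

lemma integrable_cexp_neg_mul_abs_add (h : |b.re| < a.re) :
    Integrable fun x : ℝ ↦ Complex.exp (-a * |x| + b * x) := by
  rw [← integrableOn_univ, ← Set.Iic_union_Ioi (a := (0 : ℝ))]
  exact (integrableOn_Iic_cexp_neg_mul_abs_add h).union (integrableOn_Ioi_cexp_neg_mul_abs_add h)

lemma integrable_cexp_neg_mul_abs_sub_mul (ha : 0 ≤ a.re) {μ : Measure (ℝ × ℝ)}
    {F : ℝ × ℝ → ℂ} (hF : Integrable F μ) :
    Integrable (fun p : ℝ × ℝ ↦ Complex.exp (-a * |p.1 - p.2|) * F p) μ := by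
  refine hF.bdd_mul (c := 1) (by fun_prop) (ae_of_all _ fun p ↦ ?_)
  rw [Complex.norm_exp, Real.exp_le_one_iff, Complex.re_mul_ofReal, Complex.neg_re]
  exact mul_nonpos_of_nonpos_of_nonneg (neg_nonpos.mpr ha) (abs_nonneg _)

theorem integral_cexp_neg_mul_abs_add (h : |b.re| < a.re) :
    ∫ x : ℝ, Complex.exp (-a * |x| + b * x) = 2 * a / (a ^ 2 - b ^ 2) := by
  have h_add : 0 < (a + b).re := by rw [Complex.add_re]; linarith [neg_abs_le b.re]
  have h_sub : 0 < (a - b).re := by rw [Complex.sub_re]; linarith [le_abs_self b.re]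
  have h_neg : (-a + b).re < 0 := by rw [neg_add_eq_sub, ← neg_sub, Complex.neg_re]; linarith
  have h_add_ne : a + b ≠ 0 := fun h0 ↦ by simp [h0] at h_add
  have h_sub_ne : a - b ≠ 0 := fun h0 ↦ by simp [h0] at h_sub
  rw [← intervalIntegral.integral_Iic_add_Ioi (integrableOn_Iic_cexp_neg_mul_abs_add h)
      (integrableOn_Ioi_cexp_neg_mul_abs_add h),
    setIntegral_congr_fun measurableSet_Iic (eqOn_Iic_cexp_neg_mul_abs_add a b),
    setIntegral_congr_fun measurableSet_Ioi (eqOn_Ioi_cexp_neg_mul_abs_add a b),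
    integral_exp_mul_complex_Iic h_add, integral_exp_mul_complex_Ioi h_neg,
    Complex.ofReal_zero, mul_zero, mul_zero, Complex.exp_zero, neg_add_eq_sub, ← neg_sub a b,
    neg_div_neg_eq, sq_sub_sq]
  field_simp
  ring

theorem fourier_cexp_neg_mul_abs (ha : 0 < a.re) (w : ℝ) :
    𝓕 (fun x : ℝ ↦ Complex.exp (-a * |x|)) w = 2 * a / ((2 * π * w) ^ 2 + a ^ 2) := by
  have h_re : |(-(2 * π * w * Complex.I)).re| < a.re := by simpa
  have h_sq : a ^ 2 - (-(2 * π * w * Complex.I)) ^ 2 = (2 * π * w) ^ 2 + a ^ 2 := by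
    rw [neg_sq, mul_pow _ Complex.I, Complex.I_sq]; ring
  rw [← h_sq, ← integral_cexp_neg_mul_abs_add h_re, Real.fourier_real_eq_integral_exp_smul]
  congr with x
  rw [smul_eq_mul, ← Complex.exp_add]
  push_cast
  ring_nf

lemma integrable_inv_sq_add_sq {a : ℝ} (ha : a ≠ 0) : Integrable fun x : ℝ ↦ (x ^ 2 + a ^ 2)⁻¹ := by
  have h := (integrable_inv_one_add_sq.comp_div ha).const_mul (a ^ 2)⁻¹
  refine h.congr (ae_of_all _ fun x ↦ ?_)
  simp only [← mul_inv, mul_add, div_pow, mul_one, mul_div_cancel₀ _ (pow_ne_zero 2 ha), add_comm]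

lemma integrable_two_mul_div_sq_add_sq {a : ℝ} (ha : a ≠ 0) :
    Integrable fun w : ℝ ↦ (2 * a / ((2 * π * w) ^ 2 + a ^ 2) : ℂ) := by
  have h := ((integrable_inv_sq_add_sq ha).comp_mul_left' two_pi_pos.ne').ofReal (𝕜 := ℂ)
  simpa [div_eq_mul_inv] using h.const_mul (2 * a : ℂ)

theorem fourier_two_mul_div_sq_add_sq {a : ℝ} (ha : 0 < a) (x : ℝ) :
    𝓕 (fun w : ℝ ↦ (2 * a / ((2 * π * w) ^ 2 + a ^ 2) : ℂ)) x = Complex.exp (-a * |x|) := by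
  have h_fourier := funext (fourier_cexp_neg_mul_abs (a := a) (by simpa))
  have h_int : Integrable fun x : ℝ ↦ Complex.exp (-a * |x|) := by
    simpa using integrable_cexp_neg_mul_abs_add (a := a) (b := 0) (by simpa)
  have h_inv := h_int.fourierInv_fourier_eq (v := -x)
    (h_fourier ▸ integrable_two_mul_div_sq_add_sq ha.ne') (by fun_prop)
  rwa [Real.fourierInv_eq_fourier_neg, neg_neg, abs_neg, h_fourier] at h_inv

end ExpNegMulAbs

section UnitaryFourierTransform

variable {f g : ℝ → ℂ}

lemma ft_eq_fourier (f : ℝ → ℂ) (ξ : ℝ) : ft f ξ = (√(2 * π) : ℂ)⁻¹ * 𝓕 f (ξ / (2 * π)) := by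
  rw [ft, Real.fourier_real_eq_integral_exp_smul]
  congr with x
  rw [smul_eq_mul, show -2 * π * x * (ξ / (2 * π)) = -(ξ * x) by field_simp]
  push_cast
  ring_nf

lemma ft_two_pi_mul_mul_conj (f g : ℝ → ℂ) (w : ℝ) :
    ft f (2 * π * w) * conj (ft g (2 * π * w)) =
      (2 * π : ℂ)⁻¹ * (𝓕 f w * conj (𝓕 g w)) := by
  have h_sqrt : (√(2 * π) : ℂ) * √(2 * π) = 2 * π := by
    exact_mod_cast Real.mul_self_sqrt two_pi_pos.le
  rw [ft_eq_fourier, ft_eq_fourier, mul_div_cancel_left₀ _ two_pi_pos.ne', map_mul, map_inv₀,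
    Complex.conj_ofReal, mul_mul_mul_comm, ← mul_inv, h_sqrt]

lemma norm_ft_le (f : ℝ → ℂ) (ξ : ℝ) : ‖ft f ξ‖ ≤ (√(2 * π))⁻¹ * ∫ x, ‖f x‖ := by
  rw [ft_eq_fourier, norm_mul, norm_inv, Complex.norm_of_nonneg (Real.sqrt_nonneg _)]
  gcongr
  exact VectorFourier.norm_fourierIntegral_le_integral_norm ..

lemma continuous_ft (hf : Integrable f) : Continuous (ft f) := by
  have h : Continuous (𝓕 f) :=
    VectorFourier.fourierIntegral_continuous Real.continuous_fourierChar continuous_inner hf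
  simp only [funext (ft_eq_fourier f)]
  fun_prop

lemma integrable_norm_ft_sq_mul {μ : Measure ℝ} {h : ℝ → ℝ} (hf : Integrable f)
    (hh : Integrable h μ) : Integrable (fun ξ ↦ ‖ft f ξ‖ ^ 2 * h ξ) μ := by
  refine hh.bdd_mul (c := ((√(2 * π))⁻¹ * ∫ x, ‖f x‖) ^ 2)
    ((continuous_ft hf).norm.pow 2).aestronglyMeasurable (ae_of_all _ fun ξ ↦ ?_)
  rw [norm_pow, norm_norm]
  gcongr
  exact norm_ft_le f ξ

theorem integral_cexp_neg_mul_abs_sub_mul_conj {a : ℝ} (ha : 0 < a) (hf : Integrable f)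
    (hg : Integrable g) :
    ∫ p : ℝ × ℝ, Complex.exp (-a * |p.1 - p.2|) * (f p.1 * conj (g p.2)) =
      2 * a * ∫ ξ : ℝ, ft f ξ * conj (ft g ξ) / (ξ ^ 2 + a ^ 2) := by
  set G : ℝ → ℂ := fun ξ ↦ ft f ξ * conj (ft g ξ) / (ξ ^ 2 + a ^ 2) with hG
  have h_density (w : ℝ) : 2 * a / ((2 * π * w) ^ 2 + a ^ 2) * (𝓕 f w * conj (𝓕 g w)) =
      2 * a * (2 * π * G (2 * π * w)) := by
    simp only [hG, ft_two_pi_mul_mul_conj]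
    push_cast
    field_simp
  calc
    _ = ∫ p : ℝ × ℝ, 𝓕 (fun w : ℝ ↦ (2 * a / ((2 * π * w) ^ 2 + a ^ 2) : ℂ)) (p.1 - p.2) *
          (f p.1 * conj (g p.2)) := by simp only [fourier_two_mul_div_sq_add_sq ha]
    _ = ∫ w : ℝ, 2 * a * (2 * π * G (2 * π * w)) := by
      rw [integral_fourier_sub_mul_conj hf hg (integrable_two_mul_div_sq_add_sq ha.ne')]
      simp only [h_density]
    _ = 2 * a * ∫ ξ, G ξ := by
      rw [integral_const_mul, integral_const_mul, Measure.integral_comp_mul_left,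
        abs_of_pos (inv_pos.mpr two_pi_pos), Complex.real_smul]
      push_cast
      rw [mul_inv_cancel_left₀ (by exact_mod_cast two_pi_pos.ne')]

end UnitaryFourierTransform

lemma ofReal_resolvent_kernel_sq (κ t : ℝ) :
    ((((2 * κ)⁻¹ * Real.exp (-κ * t)) ^ 2 : ℝ) : ℂ) =
      (2 * κ : ℂ)⁻¹ ^ 2 * Complex.exp (-(2 * κ : ℝ) * t) := by
  push_cast
  rw [mul_pow, ← Complex.exp_nat_mul]
  push_cast
  ring_nf

theorem stmt0_general {κ : ℝ} (hκ : 0 < κ) {q : ℝ → ℂ} (hq : Integrable q) :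
    Integrable (fun p : ℝ × ℝ ↦
      ((((2 * κ)⁻¹ * Real.exp (-κ * |p.1 - p.2|)) ^ 2 : ℝ) : ℂ) * q p.1 * conj (q p.2)) ∧
    Integrable (fun ξ : ℝ ↦ ‖ft q ξ‖ ^ 2 / (ξ ^ 2 + 4 * κ ^ 2)) ∧
    (∫ p : ℝ × ℝ,
      ((((2 * κ)⁻¹ * Real.exp (-κ * |p.1 - p.2|)) ^ 2 : ℝ) : ℂ) * q p.1 * conj (q p.2)) =
      ((κ⁻¹ * ∫ ξ : ℝ, ‖ft q ξ‖ ^ 2 / (ξ ^ 2 + 4 * κ ^ 2) : ℝ) : ℂ) := by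
  have h_sq : 4 * κ ^ 2 = (2 * κ) ^ 2 := by ring
  have hqq : Integrable fun p : ℝ × ℝ ↦ q p.1 * conj (q p.2) :=
    hq.mul_prod (Complex.conjCLE.toContinuousLinearMap.integrable_comp hq)
  have ha : 0 < 2 * κ := by positivity
  simp only [ofReal_resolvent_kernel_sq, mul_assoc, h_sq]
  refine ⟨(integrable_cexp_neg_mul_abs_sub_mul (by simpa using hκ.le) hqq).const_mul _,
    integrable_norm_ft_sq_mul hq (integrable_inv_sq_add_sq ha.ne'), ?_⟩
  rw [integral_const_mul, integral_cexp_neg_mul_abs_sub_mul_conj ha hq hq]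
  simp only [Complex.mul_conj']
  norm_cast
  field_simp

/-- For κ > 0 and real Schwartz `q`, the squared Hilbert–Schmidt norm of
`√R₀(κ) q √R₀(κ)` equals `κ⁻¹ ‖q‖²_{H^{-1}_κ}`; both sides are finite and equal. -/
theorem stmt0 (κ : ℝ) (hκ : 0 < κ) (q : SchwartzMap ℝ ℝ) :
    Integrable (fun p : ℝ × ℝ =>
      ((2 * κ)⁻¹ * Real.exp (-κ * |p.1 - p.2|)) ^ 2 * q p.1 * q p.2) ∧
    Integrable (fun ξ : ℝ => ‖ft (fun x => (q x : ℂ)) ξ‖ ^ 2 / (ξ ^ 2 + 4 * κ ^ 2)) ∧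
    (∫ p : ℝ × ℝ, ((2 * κ)⁻¹ * Real.exp (-κ * |p.1 - p.2|)) ^ 2 * q p.1 * q p.2) =
      κ⁻¹ * ∫ ξ : ℝ, ‖ft (fun x => (q x : ℂ)) ξ‖ ^ 2 / (ξ ^ 2 + 4 * κ ^ 2) := by
  have h := stmt0_general hκ (q.integrable.ofReal (𝕜 := ℂ))
  simp only [Complex.coe_algebraMap, Complex.conj_ofReal] at h
  exact_mod_cast h.imp_left Integrable.re
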